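/- Let k = 2d with d ≥ 1 and π ∈ S_k with ν(π) > 2. Let j = π(1) and let j' be the unique element of [k] congruent to j − o_j modulo k. Suppose j is not free, j' is not free, j' does not satisfy j ≈_π j', and j' occurs first in its block (i.e., π⁻¹(j') ≤ π⁻¹(j'') for all j'' with j'' ≈_π j'). Then there exists τ ∈ S_k related to π by a single prefix reversal with ν(π) − ν(τ) ≥ 2. -/

import Mathlib

/-- `π` and `τ` are related by a prefix reversal: there is `t ≤ k` such that the first `t`
entries are reversed and the remaining entries agree (0-indexed form of the paper's
1-indexed definition). -/
def PrefixRev (k : ℕ) (π τ : Equiv.Perm (Fin k)) : Prop :=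
  ∃ t : ℕ, ∃ ht : t ≤ k,
    (∀ i : Fin k, t ≤ (i : ℕ) → π i = τ i) ∧
    (∀ i : Fin k, ∀ hi : (i : ℕ) < t, π i = τ ⟨t - 1 - (i : ℕ), by omega⟩)

/-- `π` and `τ` are related by a suffix reversal: there is `t` such that the entries at
positions `< t` agree and the remaining entries are reversed. -/
def SuffixRev (k : ℕ) (π τ : Equiv.Perm (Fin k)) : Prop :=
  ∃ t : ℕ,
    (∀ i : Fin k, (i : ℕ) < t → π i = τ i) ∧
    (∀ i : Fin k, ∀ hi : t ≤ (i : ℕ), π i = τ ⟨k - 1 - (i : ℕ) + t, by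
      have := i.isLt; omega⟩)

/-- The pancake graph `P_k`, whose edges are prefix reversals. -/
def pancakeGraph (k : ℕ) : SimpleGraph (Equiv.Perm (Fin k)) :=
  SimpleGraph.fromRel (PrefixRev k)

/-- The graph `G_k`, whose edges are prefix and suffix reversals. -/
def prefixSuffixGraph (k : ℕ) : SimpleGraph (Equiv.Perm (Fin k)) :=
  SimpleGraph.fromRel (fun π τ => PrefixRev k π τ ∨ SuffixRev k π τ)

/-- The values of `π` at positions `p` and `q` differ by `1`, or are `{1, k}`
(1-indexed), i.e. `{0, k - 1}` in this 0-indexed formalization. -/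
def PiAdjacency (k : ℕ) (π : Equiv.Perm (Fin k)) (p q : Fin k) : Prop :=
  (((π p : ℕ) : ℤ) - ((π q : ℕ) : ℤ)).natAbs = 1 ∨
    ({(π p : ℕ), (π q : ℕ)} : Set ℕ) = {0, k - 1}

/-- Positions `i` and `i + 1` (0-indexed) form a `π`-adjacency. -/
def PosAdjacency (k : ℕ) (π : Equiv.Perm (Fin k)) (i : ℕ) : Prop :=
  ∃ h : i + 1 < k, PiAdjacency k π ⟨i, by omega⟩ ⟨i + 1, h⟩

/-- The equivalence relation `∼_π`: `a ∼_π b` iff every pair of consecutive positions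
between the position of `a` and the position of `b` is a `π`-adjacency. -/
def Sim (k : ℕ) (π : Equiv.Perm (Fin k)) (a b : Fin k) : Prop :=
  ∀ i : ℕ, min ((π.symm a : ℕ)) ((π.symm b : ℕ)) ≤ i →
    i < max ((π.symm a : ℕ)) ((π.symm b : ℕ)) → PosAdjacency k π i

/-- `∼_π` has exactly one equivalence class on `[k]`. -/
def OneClass (k : ℕ) (π : Equiv.Perm (Fin k)) : Prop :=
  ∀ a b : Fin k, Sim k π a b

/-- The pairing `φ(j) = j + o_j`, swapping `2i - 1 ↔ 2i` (1-indexed),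
i.e. `2i ↔ 2i + 1` (0-indexed). -/
def partner (d : ℕ) (j : Fin (2 * d)) : Fin (2 * d) :=
  ⟨if (j : ℕ) % 2 = 0 then (j : ℕ) + 1 else (j : ℕ) - 1, by
    have := j.isLt; split <;> omega⟩

/-- The equivalence relation `≈_π`. -/
def ApproxSim (d : ℕ) (π : Equiv.Perm (Fin (2 * d))) (a b : Fin (2 * d)) : Prop :=
  a = b ∨ (Sim (2 * d) π a b ∧ Sim (2 * d) π a (partner d a) ∧
    Sim (2 * d) π b (partner d b))

/-- `j` is free, i.e. `{j}` is an equivalence class (a singleton) of `≈_π`. -/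
def IsFree (d : ℕ) (π : Equiv.Perm (Fin (2 * d))) (j : Fin (2 * d)) : Prop :=
  ∀ j' : Fin (2 * d), ApproxSim d π j j' → j' = j

/-- The `≈_π`-equivalence class of `j`, as a finite set. -/
noncomputable def classOf (d : ℕ) (π : Equiv.Perm (Fin (2 * d))) (j : Fin (2 * d)) :
    Finset (Fin (2 * d)) :=
  @Finset.filter _ (fun j' => ApproxSim d π j j') (Classical.decPred _) Finset.univ

/-- `S(π)`, the number of singletons of `π`. -/
noncomputable def numSingletons (d : ℕ) (π : Equiv.Perm (Fin (2 * d))) : ℕ :=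
  (@Finset.filter _ (fun j => IsFree d π j) (Classical.decPred _) Finset.univ).card

/-- `B(π)`, the number of blocks (equivalence classes of `≈_π` of size `> 1`) of `π`. -/
noncomputable def numBlocks (d : ℕ) (π : Equiv.Perm (Fin (2 * d))) : ℕ :=
  ((Finset.univ.image (classOf d π)).filter (fun C => 1 < C.card)).card

/-- The potential function `ν(π) = (3/2) S(π) + 2 B(π)`. -/
noncomputable def nu (d : ℕ) (π : Equiv.Perm (Fin (2 * d))) : ℚ :=
  3 / 2 * (numSingletons d π : ℚ) + 2 * (numBlocks d π : ℚ)

/-- The unique element of `[k]` congruent to `j - o_j` modulo `k` (0-indexed form). -/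
def prevVal (d : ℕ) (j : Fin (2 * d)) : Fin (2 * d) :=
  ⟨if (j : ℕ) % 2 = 0 then ((j : ℕ) + 2 * d - 1) % (2 * d) else ((j : ℕ) + 1) % (2 * d), by
    have := j.isLt; split <;> exact Nat.mod_lt _ (by omega)⟩

theorem posAdj_comm (k : ℕ) (π : Equiv.Perm (Fin k)) (p q : Fin k) :
    PiAdjacency k π p q ↔ PiAdjacency k π q p := by
  unfold PiAdjacency
  rw [Set.pair_comm, ← Int.natAbs_neg, neg_sub]

theorem sim_refl {k : ℕ} (π : Equiv.Perm (Fin k)) (a : Fin k) : Sim k π a a := by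
  intro i h1 h2
  simp at h1 h2
  omega

theorem sim_symm {k : ℕ} {π : Equiv.Perm (Fin k)} {a b : Fin k} (h : Sim k π a b) :
    Sim k π b a := by
  intro i h1 h2
  exact h i (by omega) (by omega)

theorem sim_trans {k : ℕ} {π : Equiv.Perm (Fin k)} {a b c : Fin k} (h : Sim k π a b)
    (h' : Sim k π b c) : Sim k π a c := by
  intro i h1 h2
  by_cases hh : min ((π.symm a : ℕ)) ((π.symm b : ℕ)) ≤ i ∧
      i < max ((π.symm a : ℕ)) ((π.symm b : ℕ))
  · exact h i hh.1 hh.2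
  · exact h' i (by omega) (by omega)

theorem partner_ne (d : ℕ) (a : Fin (2 * d)) : partner d a ≠ a := by
  intro h
  have := congrArg Fin.val h
  simp only [partner] at this
  split at this <;> omega

theorem partner_partner (d : ℕ) (a : Fin (2 * d)) : partner d (partner d a) = a := by
  apply Fin.ext
  simp only [partner]
  split_ifs <;> omega

theorem not_free_iff (d : ℕ) (π : Equiv.Perm (Fin (2 * d))) (a : Fin (2 * d)) :
    ¬ IsFree d π a ↔ Sim (2 * d) π a (partner d a) := by
  constructor
  · intro h
    unfold IsFree at h
    push Not at h
    obtain ⟨b, hb, hne⟩ := h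
    rcases hb with hb | hb
    · exact absurd hb.symm hne
    · exact hb.2.1
  · intro h hf
    refine partner_ne d a (hf _ (Or.inr ⟨h, h, ?_⟩))
    rw [partner_partner]
    exact sim_symm h

theorem approx_refl (d : ℕ) (π : Equiv.Perm (Fin (2 * d))) (a : Fin (2 * d)) :
    ApproxSim d π a a := Or.inl rfl

theorem approx_symm {d : ℕ} {π : Equiv.Perm (Fin (2 * d))} {a b : Fin (2 * d)}
    (h : ApproxSim d π a b) : ApproxSim d π b a := by
  rcases h with rfl | ⟨h1, h2, h3⟩
  · exact Or.inl rfl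
  · exact Or.inr ⟨sim_symm h1, h3, h2⟩

theorem approx_trans {d : ℕ} {π : Equiv.Perm (Fin (2 * d))} {a b c : Fin (2 * d)}
    (h : ApproxSim d π a b) (h' : ApproxSim d π b c) : ApproxSim d π a c := by
  rcases h with rfl | ⟨h1, h2, h3⟩
  · exact h'
  · rcases h' with rfl | ⟨h4, h5, h6⟩
    · exact Or.inr ⟨h1, h2, h3⟩
    · exact Or.inr ⟨sim_trans h1 h4, h2, h6⟩

theorem mem_classOf {d : ℕ} {π : Equiv.Perm (Fin (2 * d))} {a b : Fin (2 * d)} :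
    b ∈ classOf d π a ↔ ApproxSim d π a b := by
  simp [classOf]

theorem classOf_eq {d : ℕ} {π : Equiv.Perm (Fin (2 * d))} {a b : Fin (2 * d)} :
    classOf d π a = classOf d π b ↔ ApproxSim d π a b := by
  constructor
  · intro h
    rw [← mem_classOf, h, mem_classOf]
    exact approx_refl d π b
  · intro h
    ext x
    rw [mem_classOf, mem_classOf]
    exact ⟨fun g => approx_trans (approx_symm h) g, fun g => approx_trans h g⟩

theorem one_lt_classOf {d : ℕ} {π : Equiv.Perm (Fin (2 * d))} {a : Fin (2 * d)} :
    1 < (classOf d π a).card ↔ Sim (2 * d) π a (partner d a) := by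
  rw [← not_free_iff, Finset.one_lt_card_iff_nontrivial]
  constructor
  · intro h hf
    obtain ⟨b, hb, hne⟩ := h.exists_ne a
    exact hne (hf b (mem_classOf.1 hb))
  · intro h
    unfold IsFree at h
    push Not at h
    obtain ⟨b, hb, hne⟩ := h
    exact ⟨b, mem_classOf.2 hb, a, mem_classOf.2 (approx_refl d π a), hne⟩

theorem nu_drop (d : ℕ) (π τ : Equiv.Perm (Fin (2 * d))) (j j' : Fin (2 * d))
    (hj : Sim (2 * d) π j (partner d j)) (hj' : Sim (2 * d) π j' (partner d j'))
    (hsep : ¬ ApproxSim d π j j')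
    (h1 : ∀ a b, Sim (2 * d) π a b → Sim (2 * d) τ a b)
    (h2 : Sim (2 * d) τ j j')
    (h3 : ∀ a b, Sim (2 * d) τ a b → Sim (2 * d) π a b ∨ Sim (2 * d) τ a j) :
    2 ≤ nu d π - nu d τ := by
  classical
  have hS : numSingletons d τ ≤ numSingletons d π := by
    unfold numSingletons
    apply Finset.card_le_card
    intro a ha
    simp only [Finset.mem_filter, Finset.mem_univ, true_and] at ha ⊢
    by_contra hc
    exact (not_free_iff d τ a).2 (h1 _ _ ((not_free_iff d π a).1 hc)) ha
  have happ : ∀ a b, ApproxSim d π a b → ApproxSim d τ a b := by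
    rintro a b (h | ⟨h, h', h''⟩)
    · exact Or.inl h
    · exact Or.inr ⟨h1 _ _ h, h1 _ _ h', h1 _ _ h''⟩
  have hjj : ApproxSim d τ j j' := Or.inr ⟨h2, h1 _ _ hj, h1 _ _ hj'⟩
  have hB : numBlocks d τ < numBlocks d π := by
    unfold numBlocks
    set P := (Finset.univ.image (classOf d π)).filter (fun C => 1 < C.card) with hP
    have hmem : classOf d π j' ∈ P := by
      simp only [hP, Finset.mem_filter, Finset.mem_image, Finset.mem_univ, true_and]
      exact ⟨⟨j', rfl⟩, one_lt_classOf.2 hj'⟩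
    let f : Finset (Fin (2 * d)) → Finset (Fin (2 * d)) :=
      fun C => Finset.univ.filter (fun x => ∃ c ∈ C, ApproxSim d τ c x)
    have hf : ∀ a, f (classOf d π a) = classOf d τ a := by
      intro a
      ext x
      simp only [f, Finset.mem_filter, Finset.mem_univ, true_and, mem_classOf]
      constructor
      · rintro ⟨c, hc, hx⟩
        exact approx_trans (happ _ _ hc) hx
      · intro h
        exact ⟨a, approx_refl d π a, h⟩
    have key : ∀ a, Sim (2 * d) π a (partner d a) →
        classOf d τ a ∈ (P.erase (classOf d π j')).image f := by
      intro a ha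
      by_cases haj : ApproxSim d π a j'
      · rw [classOf_eq.2 (approx_trans (happ _ _ haj) (approx_symm hjj)), ← hf]
        apply Finset.mem_image_of_mem
        rw [Finset.mem_erase, Ne, classOf_eq]
        refine ⟨hsep, ?_⟩
        simp only [hP, Finset.mem_filter, Finset.mem_image, Finset.mem_univ, true_and]
        exact ⟨⟨j, rfl⟩, one_lt_classOf.2 hj⟩
      · rw [← hf]
        apply Finset.mem_image_of_mem
        rw [Finset.mem_erase, Ne, classOf_eq]
        refine ⟨haj, ?_⟩
        simp only [hP, Finset.mem_filter, Finset.mem_image, Finset.mem_univ, true_and]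
        exact ⟨⟨a, rfl⟩, one_lt_classOf.2 ha⟩
    have hsub : (Finset.univ.image (classOf d τ)).filter (fun C => 1 < C.card) ⊆
        (P.erase (classOf d π j')).image f := by
      intro C hC
      simp only [Finset.mem_filter, Finset.mem_image, Finset.mem_univ, true_and] at hC
      obtain ⟨⟨a, rfl⟩, hC⟩ := hC
      rw [one_lt_classOf] at hC
      rcases h3 _ _ hC with h | h
      · exact key a h
      · have : ApproxSim d τ a j := Or.inr ⟨h, hC, h1 _ _ hj⟩
        rw [classOf_eq.2 this]
        exact key j hj
    calc _ ≤ _ := Finset.card_le_card hsub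
      _ ≤ _ := Finset.card_image_le
      _ < _ := Finset.card_erase_lt_of_mem hmem
  have hS' : (numSingletons d τ : ℚ) ≤ numSingletons d π := by exact_mod_cast hS
  have hB' : (numBlocks d τ : ℚ) + 1 ≤ numBlocks d π := by exact_mod_cast hB
  unfold nu
  linarith

theorem prev_val (d : ℕ) (j : Fin (2 * d)) : (prevVal d j : ℕ) = if (j : ℕ) % 2 = 0 then
      (if (j : ℕ) = 0 then 2 * d - 1 else (j : ℕ) - 1) else
      (if (j : ℕ) = 2 * d - 1 then 0 else (j : ℕ) + 1) := by
  have hjl := j.isLt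
  simp only [prevVal]
  split_ifs with h1 h2 h3
  · rw [h2, Nat.mod_eq_of_lt (by omega)]; omega
  · rw [show (j : ℕ) + 2 * d - 1 = (j - 1) + 2 * d by omega, Nat.add_mod_right,
      Nat.mod_eq_of_lt (by omega)]
  · rw [show (j : ℕ) + 1 = 2 * d by omega, Nat.mod_self]
  · rw [Nat.mod_eq_of_lt (by omega)]

theorem prev_adj (d : ℕ) (j : Fin (2 * d)) :
    (((j : ℕ) : ℤ) - ((prevVal d j : ℕ) : ℤ)).natAbs = 1 ∨
      ({(j : ℕ), (prevVal d j : ℕ)} : Set ℕ) = {0, 2 * d - 1} := by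
  have hv := prev_val d j
  have hjl := j.isLt
  rw [Set.pair_eq_pair_iff]
  split_ifs at hv <;> omega

theorem nbr (d : ℕ) (j x : Fin (2 * d))
    (h : (((x : ℕ) : ℤ) - ((prevVal d j : ℕ) : ℤ)).natAbs = 1 ∨
      ({(x : ℕ), (prevVal d j : ℕ)} : Set ℕ) = {0, 2 * d - 1}) :
    x = partner d (prevVal d j) ∨ x = j := by
  have hv := prev_val d j
  have hx := x.isLt
  have hjl := j.isLt
  have hp : (partner d (prevVal d j) : ℕ) = if (prevVal d j : ℕ) % 2 = 0 then
      (prevVal d j : ℕ) + 1 else (prevVal d j : ℕ) - 1 := rfl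
  rw [Set.pair_eq_pair_iff] at h
  rw [Fin.ext_iff, Fin.ext_iff, hp]
  split_ifs at hv ⊢ <;> omega

def rhoFun (k p : ℕ) (hpk : p ≤ k) (i : Fin k) : Fin k :=
  if h : (i : ℕ) < p then ⟨p - 1 - i, by omega⟩ else i

theorem rhoFun_val (k p : ℕ) (hpk : p ≤ k) (i : Fin k) :
    (rhoFun k p hpk i : ℕ) = if (i : ℕ) < p then p - 1 - i else i := by
  unfold rhoFun
  split_ifs <;> rfl

theorem rhoFun_inv (k p : ℕ) (hpk : p ≤ k) : Function.Involutive (rhoFun k p hpk) := by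
  intro i
  apply Fin.ext
  rw [rhoFun_val, rhoFun_val]
  split_ifs <;> omega

def tauPerm (k p : ℕ) (hpk : p ≤ k) (π : Equiv.Perm (Fin k)) : Equiv.Perm (Fin k) :=
  (Function.Involutive.toPerm _ (rhoFun_inv k p hpk)).trans π

theorem tau_apply (k p : ℕ) (hpk : p ≤ k) (π : Equiv.Perm (Fin k)) (i : Fin k) :
    tauPerm k p hpk π i = π (rhoFun k p hpk i) := rfl

theorem tau_symm (k p : ℕ) (hpk : p ≤ k) (π : Equiv.Perm (Fin k)) (a : Fin k) :
    (tauPerm k p hpk π).symm a = rhoFun k p hpk (π.symm a) := rfl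

theorem tau_tau (k p : ℕ) (hpk : p ≤ k) (π : Equiv.Perm (Fin k)) :
    tauPerm k p hpk (tauPerm k p hpk π) = π := by
  ext i
  rw [tau_apply, tau_apply, rhoFun_inv]

theorem posAdj_hi {k p : ℕ} {π : Equiv.Perm (Fin k)} {i : ℕ} (hpk : p ≤ k) (hi : p ≤ i)
    (h : PosAdjacency k π i) : PosAdjacency k (tauPerm k p hpk π) i := by
  obtain ⟨hk, h⟩ := h
  refine ⟨hk, ?_⟩
  unfold PiAdjacency at h ⊢
  rw [tau_apply, tau_apply]
  have e1 : rhoFun k p hpk ⟨i, by omega⟩ = ⟨i, by omega⟩ := by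
    apply Fin.ext; rw [rhoFun_val]; simp only; split_ifs <;> omega
  have e2 : rhoFun k p hpk ⟨i + 1, hk⟩ = ⟨i + 1, hk⟩ := by
    apply Fin.ext; rw [rhoFun_val]; simp only; split_ifs <;> omega
  rw [e1, e2]
  exact h

theorem posAdj_lo {k p : ℕ} {π : Equiv.Perm (Fin k)} {i : ℕ} (hpk : p ≤ k) (hi : i + 1 < p)
    (h : PosAdjacency k π (p - 2 - i)) : PosAdjacency k (tauPerm k p hpk π) i := by
  obtain ⟨hk, h⟩ := h
  refine ⟨by omega, ?_⟩
  rw [posAdj_comm]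
  unfold PiAdjacency at h ⊢
  rw [tau_apply, tau_apply]
  have e1 : rhoFun k p hpk ⟨i, by omega⟩ = ⟨p - 2 - i + 1, hk⟩ := by
    apply Fin.ext; rw [rhoFun_val]; simp only; split_ifs <;> omega
  have e2 : rhoFun k p hpk ⟨i + 1, by omega⟩ = ⟨p - 2 - i, by omega⟩ := by
    apply Fin.ext; rw [rhoFun_val]; simp only; split_ifs <;> omega
  rw [e1, e2]
  exact h

theorem sim_same {k p : ℕ} {π : Equiv.Perm (Fin k)} (hpk : p ≤ k) {a b : Fin k}
    (hs : (π.symm a : ℕ) < p ↔ (π.symm b : ℕ) < p) (h : Sim k π a b) :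
    Sim k (tauPerm k p hpk π) a b := by
  intro i h1 h2
  rw [tau_symm, tau_symm, rhoFun_val, rhoFun_val] at h1 h2
  by_cases ha : (π.symm a : ℕ) < p
  · have hb := hs.1 ha
    rw [if_pos ha, if_pos hb] at h1 h2
    exact posAdj_lo hpk (by omega) (h _ (by omega) (by omega))
  · have hb : ¬ (π.symm b : ℕ) < p := fun hb => ha (hs.2 hb)
    rw [if_neg ha, if_neg hb] at h1 h2
    exact posAdj_hi hpk (by omega) (h _ (by omega) (by omega))

/-- Let `k = 2d`, `d ≥ 1`, and `π ∈ S_k` with `ν(π) > 2`. Let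
`j = π(1)` and `j'` the unique element of `[k]` congruent to `j - o_j` mod `k`. If `j`
and `j'` are not free, `j ≈_π j'` fails, and `j'` occurs first in its block, then there
is `τ` related to `π` by a single prefix reversal with `ν(π) - ν(τ) ≥ 2`. -/
theorem statement_13 (d : ℕ) (hd : 1 ≤ d) (π : Equiv.Perm (Fin (2 * d)))
    (hν : 2 < nu d π)
    (hj : ¬ IsFree d π (π ⟨0, by omega⟩))
    (hj' : ¬ IsFree d π (prevVal d (π ⟨0, by omega⟩)))
    (hsep : ¬ ApproxSim d π (π ⟨0, by omega⟩) (prevVal d (π ⟨0, by omega⟩)))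
    (hfirst : ∀ j'' : Fin (2 * d), ApproxSim d π (prevVal d (π ⟨0, by omega⟩)) j'' →
      (π.symm (prevVal d (π ⟨0, by omega⟩)) : ℕ) ≤ (π.symm j'' : ℕ)) :
    ∃ τ : Equiv.Perm (Fin (2 * d)), PrefixRev (2 * d) π τ ∧
      2 ≤ nu d π - nu d τ := by
  rw [not_free_iff] at hj hj'
  set j := π ⟨0, by omega⟩ with hjd
  set j' := prevVal d j with hjd'
  obtain ⟨p, hp⟩ : ∃ p : ℕ, (π.symm j' : ℕ) = p := ⟨_, rfl⟩
  have hpk : p < 2 * d := hp ▸ (π.symm j').isLt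
  have hj0 : (π.symm j : ℕ) = 0 := by rw [hjd, Equiv.symm_apply_apply]
  have hp0 : p ≠ 0 := by
    intro h0
    apply hsep
    left
    apply π.symm.injective
    apply Fin.ext
    omega
  have hpj : π ⟨p, hpk⟩ = j' := by
    rw [← Equiv.eq_symm_apply]
    exact Fin.ext hp.symm
  have hcut : ¬ PosAdjacency (2 * d) π (p - 1) := by
    intro hadj
    have hadj' := hadj
    obtain ⟨hk, h⟩ := hadj'
    have e : (⟨p - 1 + 1, hk⟩ : Fin (2 * d)) = ⟨p, hpk⟩ := Fin.ext (by simp only; omega)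
    unfold PiAdjacency at h
    rw [e, hpj] at h
    have hsim : Sim (2 * d) π j' (π ⟨p - 1, by omega⟩) := by
      intro i h1 h2
      rw [Equiv.symm_apply_apply, hp] at h1 h2
      simp only at h1 h2
      have : i = p - 1 := by omega
      rw [this]; exact hadj
    rcases nbr d j _ h with h | h
    · have hle := hfirst (partner d j') (Or.inr ⟨hj', hj', by
        rw [partner_partner]; exact sim_symm hj'⟩)
      rw [← h, Equiv.symm_apply_apply, hp] at hle
      simp only at hle
      omega
    · rw [h] at hsim
      exact hsep (Or.inr ⟨sim_symm hsim, hj, hj'⟩)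
  have hτj : ((tauPerm (2 * d) p hpk.le π).symm j : ℕ) = p - 1 := by
    rw [tau_symm, rhoFun_val, hj0, if_pos (by omega)]; omega
  have hτj' : ((tauPerm (2 * d) p hpk.le π).symm j' : ℕ) = p := by
    rw [tau_symm, rhoFun_val, hp, if_neg (by omega)]
  refine ⟨tauPerm (2 * d) p hpk.le π, ⟨p, hpk.le, ?_, ?_⟩, ?_⟩
  · intro i hi
    rw [tau_apply]
    congr 1
    apply Fin.ext; rw [rhoFun_val, if_neg (by omega)]
  · intro i hi
    rw [tau_apply]
    congr 1
    apply Fin.ext; rw [rhoFun_val]; simp only; rw [if_pos (by omega)]; omega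
  · apply nu_drop d π _ j j' hj hj' hsep
    · intro a b h
      refine sim_same hpk.le ?_ h
      by_contra hc
      exact hcut (h (p - 1) (by omega) (by omega))
    · intro i h1 h2
      rw [hτj, hτj'] at h1 h2
      have hi : i = p - 1 := by omega
      refine ⟨by omega, ?_⟩
      have e1 : tauPerm (2 * d) p hpk.le π ⟨i, by omega⟩ = j := by
        rw [← Equiv.eq_symm_apply]; apply Fin.ext; rw [hτj]; exact hi
      have e2 : tauPerm (2 * d) p hpk.le π ⟨i + 1, by omega⟩ = j' := by
        rw [← Equiv.eq_symm_apply]; apply Fin.ext; rw [hτj']; simp only; omega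
      unfold PiAdjacency
      rw [e1, e2]
      exact prev_adj d j
    · intro a b h
      by_cases hs : (((tauPerm (2 * d) p hpk.le π).symm a : ℕ) < p ↔
          ((tauPerm (2 * d) p hpk.le π).symm b : ℕ) < p)
      · left
        have := sim_same hpk.le hs h
        rwa [tau_tau] at this
      · right
        intro i h1 h2
        rw [hτj] at h1 h2
        exact h i (by omega) (by omega)
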